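/- Let d_C ≥ 1 and d₁, d₂ ≥ 1 with d₁·d₂ ≥ 2. Let ψ be a complex positive semidefinite matrix of trace 1 acting on ℂ^{d_C} ⊗ ℂ^{d₁} ⊗ ℂ^{d₂}, and let ψ_C denote its partial trace over the second and third factors. Equip the unitary group U(d₁d₂) with its Haar probability measure, and for U ∈ U(d₁d₂) define σ(U)^{CA₂} := Tr_{A₁}[(1_{d_C} ⊗ U) ψ (1_{d_C} ⊗ U)*], the partial trace of the conjugated state over the middle factor ℂ^{d₁}. Then ∫_{U(d₁d₂)} Tr[(σ(U)^{CA₂})²] dU = Tr(ψ_C²)/d₂ + (d₂² − 1)·(d₁d₂·Tr(ψ²) − Tr(ψ_C²)) / (d₂·((d₁d₂)² − 1)). -/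

import Mathlib

open MeasureTheory Matrix Kronecker
open scoped ComplexOrder

/-- The state of the reference `C` and the remaining black hole `A₂` after the black hole
dynamics `U`: partial trace over the emitted radiation `A₁` of `(1 ⊗ U) ψ (1 ⊗ U)*`. -/
noncomputable def sigmaCA2 {dC d₁ d₂ : ℕ}
    (ψ : Matrix (Fin dC × (Fin d₁ × Fin d₂)) (Fin dC × (Fin d₁ × Fin d₂)) ℂ)
    (U : Matrix.unitaryGroup (Fin d₁ × Fin d₂) ℂ) :
    Matrix (Fin dC × Fin d₂) (Fin dC × Fin d₂) ℂ :=
  Matrix.of fun p q => ∑ a₁ : Fin d₁,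
    (((1 : Matrix (Fin dC) (Fin dC) ℂ) ⊗ₖ (U : Matrix (Fin d₁ × Fin d₂) (Fin d₁ × Fin d₂) ℂ))
        * ψ *
      ((1 : Matrix (Fin dC) (Fin dC) ℂ) ⊗ₖ (U : Matrix (Fin d₁ × Fin d₂) (Fin d₁ × Fin d₂) ℂ))ᴴ)
      (p.1, (a₁, p.2)) (q.1, (a₁, q.2))

/-- Partial trace over the second and third tensor factors. -/
noncomputable def ptraceC {dC d₁ d₂ : ℕ}
    (ψ : Matrix (Fin dC × (Fin d₁ × Fin d₂)) (Fin dC × (Fin d₁ × Fin d₂)) ℂ) :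
    Matrix (Fin dC) (Fin dC) ℂ :=
  Matrix.of fun c c' => ∑ a : Fin d₁ × Fin d₂, ψ (c, a) (c', a)

section TwirlCommutant

variable {n : Type*} [Fintype n] [DecidableEq n]

/-- The coordinates of an operator on `ℂⁿ ⊗ ℂⁿ` that commutes with every `V ⊗ V`,
`V` unitary; `G i j k l` is the coefficient of `E_ij ⊗ E_kl`. -/
def IsTwirlInvariant (G : n → n → n → n → ℂ) : Prop :=
  ∀ V ∈ Matrix.unitaryGroup n ℂ, ∀ i j k l, G i j k l =
    ∑ i', ∑ j', ∑ k', ∑ l', V i i' * star (V j j') * (V k k' * star (V l l')) * G i' j' k' l'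

namespace IsTwirlInvariant

variable {G : n → n → n → n → ℂ}

lemma apply_diagonal (hG : IsTwirlInvariant G) (z : n → ℂ) (hz : ∀ i, z i * star (z i) = 1)
    (i j k l : n) :
    G i j k l = z i * star (z j) * (z k * star (z l)) * G i j k l := by
  have hV : Matrix.diagonal z ∈ Matrix.unitaryGroup n ℂ := by
    rw [Matrix.mem_unitaryGroup_iff, Matrix.star_eq_conjTranspose, Matrix.diagonal_conjTranspose,
      Matrix.diagonal_mul_diagonal, ← Matrix.diagonal_one]
    congr 1
    ext i
    exact hz i
  have h := hG _ hV i j k l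
  simpa [Matrix.diagonal_apply, apply_ite, ite_mul, mul_ite] using h

lemma apply_perm (hG : IsTwirlInvariant G) (π : Equiv.Perm n) (i j k l : n) :
    G i j k l = G (π i) (π j) (π k) (π l) := by
  have hV : π.permMatrix ℂ ∈ Matrix.unitaryGroup n ℂ := by
    rw [Matrix.mem_unitaryGroup_iff, Matrix.star_eq_conjTranspose, Matrix.conjTranspose_permMatrix,
      ← Matrix.permMatrix_mul]
    simp
  have h := hG _ hV i j k l
  simpa [Equiv.Perm.permMatrix, PEquiv.toMatrix_apply, apply_ite, ite_mul, mul_ite, eq_comm]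
    using h

lemma eq_zero (hG : IsTwirlInvariant G) {i j k l : n} (h₁ : ¬ (i = j ∧ k = l))
    (h₂ : ¬ (i = l ∧ k = j)) : G i j k l = 0 := by
  have key (p : n) := hG.apply_diagonal (fun i => if i = p then Complex.I else 1)
    (fun i => by split_ifs <;> simp) i j k l
  by_contra hne
  have key' (p : n) := mul_right_cancel₀ hne ((one_mul _).trans (key p))
  have hi := key' i
  have hk := key' k
  clear key key'
  by_cases hki : k = i
  · subst hki
    by_cases hjk : j = k <;> by_cases hlk : l = k <;>
      norm_num [hjk, hlk, Complex.ext_iff] at hi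
    exact h₁ ⟨hjk.symm, hlk.symm⟩
  · by_cases hji : j = i <;> by_cases hli : l = i <;> by_cases hjk : j = k <;>
      by_cases hlk : l = k <;>
      simp [hji, hli, hki, Ne.symm hki, hjk, hlk, Complex.ext_iff] at hi hk <;>
      grind

lemma apply_diag_eq_add (hG : IsTwirlInvariant G) {p q : n} (hpq : p ≠ q) :
    G p p p p = G p p q q + G p q q p := by
  let w : n → ℂ := Pi.single p 1 + Pi.single q 2
  have hw : w ⬝ᵥ w = 5 := by
    simp [w, dotProduct_add, hpq, hpq.symm]
    norm_num
  have hws : (star w : n → ℂ) = w := by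
    ext i
    by_cases hi : p = i <;> by_cases hj : q = i <;> simp [w, eq_comm, hi, hj]
  let V : Matrix n n ℂ := 1 - (2 / 5 : ℂ) • Matrix.vecMulVec w w
  have hVs : star V = V := by
    simp only [V, Matrix.star_eq_conjTranspose, Matrix.conjTranspose_sub,
      Matrix.conjTranspose_one, Matrix.conjTranspose_smul, Matrix.conjTranspose_vecMulVec, hws]
    simp
  have hV : V ∈ Matrix.unitaryGroup n ℂ := by
    rw [Matrix.mem_unitaryGroup_iff, hVs]
    simp only [V, sub_mul, mul_sub, one_mul, mul_one, Matrix.smul_mul, Matrix.mul_smul,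
      Matrix.vecMulVec_mul_vecMulVec, hw, Matrix.vecMulVec_smul]
    module
  have hrow (i : n) :
      V p i = (if i = p then (3 / 5 : ℂ) else 0) + (if i = q then -4 / 5 else 0) := by
    by_cases hi : i = p
    · subst hi
      simp [V, w, Matrix.vecMulVec_apply, hpq]
      norm_num
    · by_cases hj : i = q
      · subst hj
        simp [V, w, Matrix.vecMulVec_apply, hpq, hpq.symm]
        norm_num
      · simp [V, w, Matrix.vecMulVec_apply, hpq, hi, hj, Ne.symm hi]
  have hsum (f : n → ℂ) : ∑ i, V p i * f i = 3 / 5 * f p + -4 / 5 * f q := by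
    simp [hrow, add_mul, ite_mul, Finset.sum_add_distrib]
  have hsum' (f : n → ℂ) : ∑ i, star (V p i) * f i = 3 / 5 * f p + -4 / 5 * f q := by
    have hstar (i : n) : star (V p i) = V p i := by
      rw [hrow]
      split_ifs <;> simp
    simp only [hstar, hsum]
  have h := hG V hV p p p p
  simp only [mul_assoc, ← Finset.mul_sum, hsum, hsum'] at h
  have hs := hG.apply_perm (Equiv.swap p q)
  have e₁ := hs q q q q
  have e₂ := hs q q p p
  have e₃ := hs q p p q
  simp only [Equiv.swap_apply_left, Equiv.swap_apply_right] at e₁ e₂ e₃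
  rw [e₁, e₂, e₃] at h
  simp only [hG.eq_zero (i := p) (j := p) (k := p) (l := q) (by tauto) (by tauto),
    hG.eq_zero (i := p) (j := q) (k := p) (l := p) (by tauto) (by tauto),
    hG.eq_zero (i := p) (j := q) (k := p) (l := q) (by tauto) (by tauto),
    hG.eq_zero (i := p) (j := q) (k := q) (l := q) (by tauto) (by tauto),
    hG.eq_zero (i := q) (j := p) (k := p) (l := p) (by tauto) (by tauto),
    hG.eq_zero (i := q) (j := p) (k := q) (l := p) (by tauto) (by tauto),
    hG.eq_zero (i := q) (j := p) (k := q) (l := q) (by tauto) (by tauto),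
    hG.eq_zero (i := q) (j := q) (k := p) (l := q) (by tauto) (by tauto),
    hG.eq_zero (i := q) (j := q) (k := q) (l := p) (by tauto) (by tauto),
    hG.eq_zero (i := p) (j := p) (k := q) (l := p) (by tauto) (by tauto)] at h
  linear_combination (625 / 288) * h

lemma exists_eq (hG : IsTwirlInvariant G) [Nontrivial n] :
    ∃ a b : ℂ, ∀ i j k l, G i j k l =
      a * ((if i = j then 1 else 0) * (if k = l then 1 else 0)) +
        b * ((if i = l then 1 else 0) * (if k = j then 1 else 0)) := by
  obtain ⟨p, q, hpq⟩ := exists_pair_ne n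
  have hperm {i k : n} (hik : i ≠ k) : ∃ π : Equiv.Perm n, π i = p ∧ π k = q := by
    refine ⟨Equiv.swap (Equiv.swap i p k) q * Equiv.swap i p, ?_, by simp⟩
    rw [Equiv.Perm.mul_apply, Equiv.swap_apply_left]
    refine Equiv.swap_apply_of_ne_of_ne ?_ hpq
    intro h
    exact hik ((Equiv.swap i p).injective (by rw [Equiv.swap_apply_left]; exact h))
  have ha {i k : n} (hik : i ≠ k) : G i i k k = G p p q q := by
    obtain ⟨π, rfl, rfl⟩ := hperm hik
    exact hG.apply_perm π _ _ _ _
  have hb {i k : n} (hik : i ≠ k) : G i k k i = G p q q p := by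
    obtain ⟨π, rfl, rfl⟩ := hperm hik
    exact hG.apply_perm π _ _ _ _
  refine ⟨G p p q q, G p q q p, fun i j k l => ?_⟩
  by_cases h₁ : i = j ∧ k = l
  · obtain ⟨rfl, rfl⟩ := h₁
    by_cases hik : i = k
    · subst hik
      obtain ⟨r, hr⟩ := exists_ne i
      simp [hG.apply_diag_eq_add hr.symm, ha hr.symm, hb hr.symm]
    · simp [ha hik, hik]
  · by_cases h₂ : i = l ∧ k = j
    · obtain ⟨rfl, rfl⟩ := h₂
      have hik : i ≠ k := fun h => h₁ ⟨h, h.symm⟩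
      simp [hb hik, hik]
    · rw [hG.eq_zero h₁ h₂, ite_zero_mul_ite_zero, ite_zero_mul_ite_zero, if_neg h₁, if_neg h₂]
      simp

end IsTwirlInvariant

end TwirlCommutant

section HaarTwirl

variable {n : Type*} [Fintype n]

lemma mul_mul_star_apply (U A : Matrix n n ℂ) (i j : n) :
    (U * A * star U) i j = ∑ i', ∑ j', U i i' * star (U j j') * A i' j' := by
  simp only [Matrix.mul_apply, Finset.sum_mul, Matrix.star_apply]
  rw [Finset.sum_comm]
  exact Finset.sum_congr rfl fun _ _ => Finset.sum_congr rfl fun _ _ => by ring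

variable [DecidableEq n]

lemma trace_unitary_conj (U : Matrix.unitaryGroup n ℂ) (A : Matrix n n ℂ) :
    (U.1 * A * star U.1).trace = A.trace := by
  rw [Matrix.trace_mul_comm, ← mul_assoc, Unitary.coe_star_mul_self, one_mul]

lemma norm_unitary_conj_apply_le {U : Matrix n n ℂ} (hU : U ∈ Matrix.unitaryGroup n ℂ)
    (A : Matrix n n ℂ) (i j : n) : ‖(U * A * star U) i j‖ ≤ ∑ i', ∑ j', ‖A i' j'‖ := by
  rw [mul_mul_star_apply]
  refine (norm_sum_le _ _).trans (Finset.sum_le_sum fun i' _ => ?_)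
  refine (norm_sum_le _ _).trans (Finset.sum_le_sum fun j' _ => ?_)
  rw [norm_mul, norm_mul, norm_star]
  exact mul_le_of_le_one_left (norm_nonneg _) (mul_le_one₀ (entry_norm_bound_of_unitary hU _ _)
    (norm_nonneg _) (entry_norm_bound_of_unitary hU _ _))

variable [MeasurableSpace (Matrix.unitaryGroup n ℂ)] [BorelSpace (Matrix.unitaryGroup n ℂ)]
  (μ : Measure (Matrix.unitaryGroup n ℂ))

lemma integrable_unitary_conj_mul [IsFiniteMeasure μ] (A B : Matrix n n ℂ) (i j k l : n) :
    Integrable (fun U : Matrix.unitaryGroup n ℂ =>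
      (U.1 * A * star U.1) i j * (U.1 * B * star U.1) k l) μ := by
  refine Integrable.of_bound (Continuous.aestronglyMeasurable ?_)
    ((∑ i', ∑ j', ‖A i' j'‖) * ∑ i', ∑ j', ‖B i' j'‖) (.of_forall fun U => ?_)
  · have h (A : Matrix n n ℂ) (i j : n) :
        Continuous fun U : Matrix.unitaryGroup n ℂ => (U.1 * A * star U.1) i j :=
      Continuous.matrix_elem (by fun_prop) i j
    exact (h A i j).mul (h B k l)
  · rw [norm_mul]
    exact mul_le_mul (norm_unitary_conj_apply_le U.2 _ _ _) (norm_unitary_conj_apply_le U.2 _ _ _)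
      (norm_nonneg _) (by positivity)

/-- The coordinates of the Haar twirl `∫ (U ⊗ U) (A ⊗ B) (U ⊗ U)* dU`. -/
noncomputable def haarTwirl (A B : Matrix n n ℂ) (i j k l : n) : ℂ :=
  ∫ U : Matrix.unitaryGroup n ℂ, (U.1 * A * star U.1) i j * (U.1 * B * star U.1) k l ∂μ

lemma isTwirlInvariant_haarTwirl [μ.IsMulLeftInvariant] [IsFiniteMeasure μ]
    (A B : Matrix n n ℂ) : IsTwirlInvariant (haarTwirl μ A B) := by
  intro V hV i j k l
  have hint := integrable_unitary_conj_mul μ A B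
  rw [haarTwirl, ← integral_mul_left_eq_self _ (⟨V, hV⟩ : Matrix.unitaryGroup n ℂ)]
  have h (U : Matrix.unitaryGroup n ℂ) (A : Matrix n n ℂ) :
      (V * U.1) * A * star (V * U.1) = V * (U.1 * A * star U.1) * star V := by
    simp only [star_mul, mul_assoc]
  simp only [Submonoid.coe_mul, h]
  have hsum (U : Matrix.unitaryGroup n ℂ) :
      (V * (U.1 * A * star U.1) * star V) i j * (V * (U.1 * B * star U.1) * star V) k l =
      ∑ i', ∑ j', ∑ k', ∑ l', V i i' * star (V j j') * (V k k' * star (V l l')) *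
        ((U.1 * A * star U.1) i' j' * (U.1 * B * star U.1) k' l') := by
    rw [mul_mul_star_apply V, mul_mul_star_apply V]
    simp only [Finset.sum_mul]
    simp only [Finset.mul_sum]
    refine Finset.sum_congr rfl fun _ _ => Finset.sum_congr rfl fun _ _ =>
      Finset.sum_congr rfl fun _ _ => Finset.sum_congr rfl fun _ _ => by ring
  simp only [hsum]
  rw [integral_finsetSum _ fun _ _ => integrable_finsetSum _ fun _ _ => integrable_finsetSum _
    fun _ _ => integrable_finsetSum _ fun _ _ => (hint _ _ _ _).const_mul _]
  refine Finset.sum_congr rfl fun _ _ => ?_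
  rw [integral_finsetSum _ fun _ _ => integrable_finsetSum _
    fun _ _ => integrable_finsetSum _ fun _ _ => (hint _ _ _ _).const_mul _]
  refine Finset.sum_congr rfl fun _ _ => ?_
  rw [integral_finsetSum _ fun _ _ => integrable_finsetSum _ fun _ _ => (hint _ _ _ _).const_mul _]
  refine Finset.sum_congr rfl fun _ _ => ?_
  rw [integral_finsetSum _ fun _ _ => (hint _ _ _ _).const_mul _]
  exact Finset.sum_congr rfl fun _ _ => integral_const_mul _ _

lemma sum_haarTwirl_trace_mul_trace [IsProbabilityMeasure μ] (A B : Matrix n n ℂ) :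
    ∑ i, ∑ k, haarTwirl μ A B i i k k = A.trace * B.trace := by
  have hint := integrable_unitary_conj_mul μ A B
  have h (U : Matrix.unitaryGroup n ℂ) :
      ∑ i, ∑ k, (U.1 * A * star U.1) i i * (U.1 * B * star U.1) k k = A.trace * B.trace := by
    rw [← trace_unitary_conj U A, ← trace_unitary_conj U B, Matrix.trace, Matrix.trace,
      Finset.sum_mul_sum]
    rfl
  calc _ = ∫ U : Matrix.unitaryGroup n ℂ,
        ∑ i, ∑ k, (U.1 * A * star U.1) i i * (U.1 * B * star U.1) k k ∂μ := by
        rw [integral_finsetSum _ fun _ _ => integrable_finsetSum _ fun _ _ => hint _ _ _ _]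
        refine Finset.sum_congr rfl fun _ _ => ?_
        rw [integral_finsetSum _ fun _ _ => hint _ _ _ _]
        rfl
    _ = _ := by simp [h]

lemma sum_haarTwirl_trace_mul [IsProbabilityMeasure μ] (A B : Matrix n n ℂ) :
    ∑ i, ∑ k, haarTwirl μ A B i k k i = (A * B).trace := by
  have hint := integrable_unitary_conj_mul μ A B
  have h (U : Matrix.unitaryGroup n ℂ) :
      ∑ i, ∑ k, (U.1 * A * star U.1) i k * (U.1 * B * star U.1) k i = (A * B).trace := by
    have hmul : U.1 * (A * B) * star U.1 = (U.1 * A * star U.1) * (U.1 * B * star U.1) := by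
      have := Unitary.coe_star_mul_self U
      calc _ = U.1 * A * 1 * B * star U.1 := by simp only [mul_one, mul_assoc]
        _ = _ := by rw [← this]; simp only [mul_assoc]
    rw [← trace_unitary_conj U (A * B), hmul]
    rfl
  calc _ = ∫ U : Matrix.unitaryGroup n ℂ,
        ∑ i, ∑ k, (U.1 * A * star U.1) i k * (U.1 * B * star U.1) k i ∂μ := by
        rw [integral_finsetSum _ fun _ _ => integrable_finsetSum _ fun _ _ => hint _ _ _ _]
        refine Finset.sum_congr rfl fun _ _ => ?_
        rw [integral_finsetSum _ fun _ _ => hint _ _ _ _]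
        rfl
    _ = _ := by simp [h]

lemma haarTwirl_apply [Nontrivial n] [μ.IsMulLeftInvariant] [IsProbabilityMeasure μ]
    (A B : Matrix n n ℂ) (i j k l : n) :
    haarTwirl μ A B i j k l =
      (Fintype.card n * (A.trace * B.trace) - (A * B).trace) /
          (Fintype.card n * ((Fintype.card n : ℂ) ^ 2 - 1)) *
          ((if i = j then 1 else 0) * (if k = l then 1 else 0)) +
        (Fintype.card n * (A * B).trace - A.trace * B.trace) /
          (Fintype.card n * ((Fintype.card n : ℂ) ^ 2 - 1)) *
          ((if i = l then 1 else 0) * (if k = j then 1 else 0)) := by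
  obtain ⟨a, b, hG⟩ := (isTwirlInvariant_haarTwirl μ A B).exists_eq
  have h₁ := sum_haarTwirl_trace_mul_trace μ A B
  have h₂ := sum_haarTwirl_trace_mul μ A B
  simp only [hG] at h₁ h₂ ⊢
  simp [Finset.sum_add_distrib] at h₁ h₂
  have hD : (1 : ℝ) < Fintype.card n := by exact_mod_cast Fintype.one_lt_card
  have hD₀ : (Fintype.card n : ℂ) ≠ 0 := by exact_mod_cast (by linarith : (Fintype.card n : ℝ) ≠ 0)
  have hD₁ : (Fintype.card n : ℂ) ^ 2 - 1 ≠ 0 := by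
    exact_mod_cast (by nlinarith : (Fintype.card n : ℝ) ^ 2 - 1 ≠ 0)
  rw [← h₁, ← h₂]
  congr 2 <;> field_simp <;> ring

end HaarTwirl

section Blocks

variable {m n : Type*}

/-- The `(c, c')` block, an operator on the second tensor factor. -/
def secondFactorBlock (ψ : Matrix (m × n) (m × n) ℂ) (c c' : m) : Matrix n n ℂ :=
  Matrix.of fun i j => ψ (c, i) (c', j)

variable [Fintype m] [Fintype n]

lemma one_kronecker_conj_apply [DecidableEq m] (ψ : Matrix (m × n) (m × n) ℂ) (U : Matrix n n ℂ)
    (c c' : m) (i j : n) :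
    (((1 : Matrix m m ℂ) ⊗ₖ U) * ψ * ((1 : Matrix m m ℂ) ⊗ₖ U)ᴴ) (c, i) (c', j) =
      (U * secondFactorBlock ψ c c' * star U) i j := by
  simp [Matrix.mul_apply, Fintype.sum_prod_type, Matrix.one_apply, secondFactorBlock,
    Matrix.star_apply, ite_mul, apply_ite]

lemma sum_trace_secondFactorBlock_mul (ψ : Matrix (m × n) (m × n) ℂ) :
    ∑ c, ∑ c', (secondFactorBlock ψ c c' * secondFactorBlock ψ c' c).trace = (ψ * ψ).trace := by
  simp only [Matrix.trace, Matrix.diag, Matrix.mul_apply, Fintype.sum_prod_type,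
    secondFactorBlock, Matrix.of_apply]
  exact Finset.sum_congr rfl fun _ _ => Finset.sum_comm

end Blocks

lemma sum_trace_mul_trace_secondFactorBlock {dC d₁ d₂ : ℕ}
    (ψ : Matrix (Fin dC × (Fin d₁ × Fin d₂)) (Fin dC × (Fin d₁ × Fin d₂)) ℂ) :
    ∑ c, ∑ c', (secondFactorBlock ψ c c').trace * (secondFactorBlock ψ c' c).trace =
      (ptraceC ψ * ptraceC ψ).trace := rfl

lemma trace_sigmaCA2_mul_self {dC d₁ d₂ : ℕ}
    (ψ : Matrix (Fin dC × (Fin d₁ × Fin d₂)) (Fin dC × (Fin d₁ × Fin d₂)) ℂ)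
    (U : Matrix.unitaryGroup (Fin d₁ × Fin d₂) ℂ) :
    (sigmaCA2 ψ U * sigmaCA2 ψ U).trace =
      ∑ c, ∑ c', ∑ x, ∑ y, ∑ a, ∑ a',
        (U.1 * secondFactorBlock ψ c c' * star U.1) (a, x) (a, y) *
          (U.1 * secondFactorBlock ψ c' c * star U.1) (a', y) (a', x) := by
  have h (c c' : Fin dC) (x y : Fin d₂) : sigmaCA2 ψ U (c, x) (c', y) =
      ∑ a, (U.1 * secondFactorBlock ψ c c' * star U.1) (a, x) (a, y) := by
    simp only [sigmaCA2, Matrix.of_apply, one_kronecker_conj_apply]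
  simp only [Matrix.trace, Matrix.diag, Matrix.mul_apply (M := sigmaCA2 ψ U),
    Fintype.sum_prod_type (α₁ := Fin dC), h, Finset.sum_mul_sum]
  exact Finset.sum_congr rfl fun _ _ => Finset.sum_comm

lemma sum_haarTwirl_partial_swap {d₁ d₂ : ℕ} [Nontrivial (Fin d₁ × Fin d₂)]
    [MeasurableSpace (Matrix.unitaryGroup (Fin d₁ × Fin d₂) ℂ)]
    [BorelSpace (Matrix.unitaryGroup (Fin d₁ × Fin d₂) ℂ)]
    (μ : Measure (Matrix.unitaryGroup (Fin d₁ × Fin d₂) ℂ))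
    [μ.IsMulLeftInvariant] [IsProbabilityMeasure μ]
    (A B : Matrix (Fin d₁ × Fin d₂) (Fin d₁ × Fin d₂) ℂ) :
    ∑ x, ∑ y, ∑ a, ∑ a', haarTwirl μ A B (a, x) (a, y) (a', y) (a', x) =
      (d₂ * ((d₁ : ℂ) ^ 2 - 1) * (A.trace * B.trace) +
        d₁ * ((d₂ : ℂ) ^ 2 - 1) * (A * B).trace) / ((d₁ * d₂ : ℂ) ^ 2 - 1) := by
  have hD : 1 < d₁ * d₂ := by
    simpa using Fintype.one_lt_card (α := Fin d₁ × Fin d₂)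
  have hD' : (1 : ℝ) < d₁ * d₂ := by exact_mod_cast hD
  have hd₁ : (d₁ : ℂ) ≠ 0 := by
    rintro h
    simp_all
  have hd₂ : (d₂ : ℂ) ≠ 0 := by
    rintro h
    simp_all
  have hD₁ : (d₁ * d₂ : ℂ) ^ 2 - 1 ≠ 0 := by
    exact_mod_cast (by nlinarith : (d₁ * d₂ : ℝ) ^ 2 - 1 ≠ 0)
  have h₁ (x y : Fin d₂) : (if y = x then (1 : ℂ) else 0) = if x = y then 1 else 0 := by
    simp only [eq_comm]
  have h₂ (a a' : Fin d₁) : (if a' = a then (1 : ℂ) else 0) = if a = a' then 1 else 0 := by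
    simp only [eq_comm]
  simp only [haarTwirl_apply, Prod.mk.injEq, true_and, and_true, Fintype.card_prod,
    Fintype.card_fin, h₁, h₂, ite_mul_ite, mul_one, mul_zero]
  simp [Finset.sum_add_distrib]
  field_simp
  ring

/-- The quantum instance of the paper's Lemma `TheDecouplingPurity`: the Haar-averaged
purity of `σ(U)^{CA₂}`. -/
theorem stmt8 (dC d₁ d₂ : ℕ) (hdC : 1 ≤ dC) (hd₁ : 1 ≤ d₁) (hd₂ : 1 ≤ d₂)
    (hd : 2 ≤ d₁ * d₂)
    (ψ : Matrix (Fin dC × (Fin d₁ × Fin d₂)) (Fin dC × (Fin d₁ × Fin d₂)) ℂ)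
    (hψ : ψ.PosSemidef) (htr : ψ.trace = 1)
    [MeasurableSpace (Matrix.unitaryGroup (Fin d₁ × Fin d₂) ℂ)]
    [BorelSpace (Matrix.unitaryGroup (Fin d₁ × Fin d₂) ℂ)]
    (μ : Measure (Matrix.unitaryGroup (Fin d₁ × Fin d₂) ℂ))
    [μ.IsHaarMeasure] [IsProbabilityMeasure μ] :
    ∫ U, (sigmaCA2 ψ U * sigmaCA2 ψ U).trace ∂μ
      = (ptraceC ψ * ptraceC ψ).trace / (d₂ : ℂ)
        + ((d₂ : ℂ) ^ 2 - 1) *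
            ((d₁ * d₂ : ℂ) * (ψ * ψ).trace - (ptraceC ψ * ptraceC ψ).trace)
          / ((d₂ : ℂ) * ((d₁ * d₂ : ℂ) ^ 2 - 1)) := by
  have : Nontrivial (Fin d₁ × Fin d₂) := by
    rw [← Fintype.one_lt_card_iff_nontrivial]
    simpa [Nat.lt_iff_add_one_le] using hd
  have hint (c c' : Fin dC) := integrable_unitary_conj_mul μ
    (secondFactorBlock ψ c c') (secondFactorBlock ψ c' c)
  have hkey : ∫ U, (sigmaCA2 ψ U * sigmaCA2 ψ U).trace ∂μ =
      ∑ c, ∑ c', ∑ x, ∑ y, ∑ a, ∑ a', haarTwirl μ (secondFactorBlock ψ c c')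
        (secondFactorBlock ψ c' c) (a, x) (a, y) (a', y) (a', x) := by
    simp only [trace_sigmaCA2_mul_self, haarTwirl]
    simp (discharger := fun_prop) only [integral_finsetSum]
  have hd₂' : (d₂ : ℂ) ≠ 0 := by exact_mod_cast (by omega : d₂ ≠ 0)
  have hD : (2 : ℝ) ≤ d₁ * d₂ := by exact_mod_cast hd
  have hD' : (d₁ * d₂ : ℂ) ^ 2 - 1 ≠ 0 := by
    exact_mod_cast (by nlinarith : (d₁ * d₂ : ℝ) ^ 2 - 1 ≠ 0)
  simp only [hkey, sum_haarTwirl_partial_swap, ← Finset.sum_div, Finset.sum_add_distrib,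
    ← Finset.mul_sum, sum_trace_secondFactorBlock_mul, sum_trace_mul_trace_secondFactorBlock]
  rw [div_add_div _ _ hd₂' (mul_ne_zero hd₂' hD'),
    div_eq_div_iff hD' (mul_ne_zero hd₂' (mul_ne_zero hd₂' hD'))]
  ring
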